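/- Let q be a prime power with q > 2^{20} · 10^2 = 104857600. Then for every integer k with 1 < k < q and (k-1) dividing (q-1), not every element of F_q can be written as the sum of a k-potent element, a 3-potent element, and a 4-potent element, i.e., C_k + C_3 + C_4 ≠ F_q. -/

import Mathlib

/-!
Let `χ ≠ 1` be a character of `Fˣ` trivial on the nonzero `k`-potents, and let `T` be a set of `n`
elements of `F`. The weight `∏ s ∈ T, (1 - χ (s - x))` vanishes whenever `s - x` is a nonzero
`k`-potent for some `s ∈ T`, while expanding it and applying Weil's bound to each term shows that
its sum over `x` is close to `|F|`. So once `(n * 2 ^ n) ^ 2 ≤ |F|`, the translates of the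
`k`-potents by `n` elements do not cover `F`; there are at most `10` sums of a `3`-potent and a
`4`-potent, and `(10 * 2 ^ 10) ^ 2 = 2 ^ 20 * 10 ^ 2`.

Weil's bound is obtained in two steps. Over an extension of even degree `2 * r` the fibers of
`χ ∘ Norm` on the values of `∏ s ∈ T, (s - x)` are counted by Stepanov's method, with an error of
order `|F| ^ r`. The sums over all the extensions are, up to sign, the power sums of the inverse
roots of an L-polynomial of degree at most `n - 1`, so this forces each inverse root to have norm
at most `√|F|`.
-/

open Polynomial

section HasseDerivative

variable {R : Type*} [CommRing R]

/-- `f` is logarithmic along `h` when every Hasse derivative of `f` is, up to a power of `h`, a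
multiple of `f` itself: `h ^ l * D_l f = f * p` with `deg p ≤ l * deg h`. The point is that the
degree of `p` does not grow with that of `f`. -/
def IsHasseLogarithmic (h f : R[X]) : Prop :=
  ∀ l, ∃ p : R[X], p.natDegree ≤ l * h.natDegree ∧ h ^ l * hasseDeriv l f = f * p

theorem IsHasseLogarithmic.one (h : R[X]) : IsHasseLogarithmic h 1 := by
  intro l
  rcases l.eq_zero_or_pos with rfl | hl
  · exact ⟨1, by simp, by simp⟩
  · exact ⟨0, by simp, by simp [hasseDeriv_apply_one _ hl]⟩

theorem IsHasseLogarithmic.mul {h f g : R[X]} (hf : IsHasseLogarithmic h f)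
    (hg : IsHasseLogarithmic h g) : IsHasseLogarithmic h (f * g) := by
  intro l
  choose p hp_deg hp using hf
  choose q hq_deg hq using hg
  refine ⟨∑ ij ∈ Finset.HasAntidiagonal.antidiagonal l, p ij.1 * q ij.2, ?_, ?_⟩
  · refine natDegree_sum_le_of_forall_le _ _ fun ij hij ↦ natDegree_mul_le.trans ?_
    rw [← Finset.HasAntidiagonal.mem_antidiagonal.1 hij, add_mul]
    exact add_le_add (hp_deg _) (hq_deg _)
  · rw [hasseDeriv_mul, Finset.mul_sum, Finset.mul_sum]
    refine Finset.sum_congr rfl fun ij hij ↦ ?_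
    rw [← Finset.HasAntidiagonal.mem_antidiagonal.1 hij, pow_add, mul_mul_mul_comm, hp, hq,
      mul_mul_mul_comm]

theorem IsHasseLogarithmic.pow {h f : R[X]} (hf : IsHasseLogarithmic h f) (n : ℕ) :
    IsHasseLogarithmic h (f ^ n) := by
  induction n with
  | zero => simpa only [pow_zero] using IsHasseLogarithmic.one h
  | succ n ih => simpa only [pow_succ] using ih.mul hf

theorem IsHasseLogarithmic.of_dvd [IsDomain R] {h f : R[X]} (hh : h ≠ 0) (hfh : f ∣ h) :
    IsHasseLogarithmic h f := by
  obtain ⟨g, rfl⟩ := hfh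
  intro l
  rcases l with - | l
  · exact ⟨1, by simp, by simp⟩
  · refine ⟨f ^ l * g ^ (l + 1) * hasseDeriv (l + 1) f, ?_, by ring⟩
    rw [natDegree_mul (left_ne_zero_of_mul hh) (right_ne_zero_of_mul hh)]
    calc _ ≤ l * f.natDegree + (l + 1) * g.natDegree + f.natDegree :=
          natDegree_mul_le_of_le
            (natDegree_mul_le_of_le natDegree_pow_le natDegree_pow_le)
            ((natDegree_hasseDeriv_le f _).trans (Nat.sub_le _ _))
      _ = _ := by ring

theorem card_mul_le_natDegree_of_hasseDeriv_eval_eq_zero {K : Type*} [Field K] {f : K[X]}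
    (hf : f ≠ 0) {M : ℕ} {A : Finset K}
    (h : ∀ x ∈ A, ∀ l < M, (hasseDeriv l f).eval x = 0) : A.card * M ≤ f.natDegree := by
  have hdvd : ∏ x ∈ A, (X - C x) ^ M ∣ f := by
    refine Finset.prod_dvd_of_coprime (fun x _ y _ hxy ↦ ?_) fun x hx ↦ ?_
    · exact (isCoprime_X_sub_C_of_isUnit_sub (sub_ne_zero.2 hxy).isUnit).pow
    · rw [X_sub_C_pow_dvd_iff, X_pow_dvd_iff]
      intro l hl
      rw [← taylor_apply, taylor_coeff, h x hx l hl]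
  calc A.card * M = (∏ x ∈ A, (X - C x) ^ M).natDegree := by
        rw [natDegree_prod_of_monic _ _ fun x _ ↦ (monic_X_sub_C x).pow M]
        simp
    _ ≤ f.natDegree := natDegree_le_of_dvd hdvd hf

theorem linearIndependent_X_sub_C_pow_mul {K κ : Type*} [Field K] (a : K) {N : κ → ℕ}
    (hN : Function.Injective N) {G : κ → K[X]} (hG : ∀ z, (G z).eval a ≠ 0) :
    LinearIndependent K fun z ↦ (X - C a) ^ N z * G z := by
  classical
  rw [linearIndependent_iff']
  intro s c hsum
  by_contra! ⟨z₀, hz₀⟩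
  obtain ⟨z, hz, hmin⟩ := (s.filter (c · ≠ 0)).exists_min_image N ⟨z₀, by simpa using hz₀⟩
  simp only [Finset.mem_filter, and_imp] at hz hmin
  have hdvd : (X - C a) ^ (N z + 1) ∣ ∑ w ∈ s.erase z, c w • ((X - C a) ^ N w * G w) := by
    refine Finset.dvd_sum fun w hw ↦ ?_
    obtain ⟨hwz, hws⟩ := Finset.mem_erase.1 hw
    by_cases hcw : c w = 0
    · simp [hcw]
    · exact dvd_smul_of_dvd _ (dvd_mul_of_dvd_left (pow_dvd_pow _ <|
        (hmin w hws hcw).lt_of_ne (hN.ne hwz.symm)) _)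
  rw [← Finset.add_sum_erase s _ hz.1] at hsum
  have hlead : (X - C a) ^ N z * (X - C a) ∣ (X - C a) ^ N z * (c z • G z) := by
    rw [← pow_succ, mul_smul_comm, ← dvd_add_left hdvd, hsum]
    exact dvd_zero _
  have hroot := (mul_dvd_mul_iff_left (pow_ne_zero _ (X_sub_C_ne_zero a))).1 hlead
  rw [dvd_iff_isRoot, IsRoot, eval_smul, smul_eq_mul] at hroot
  exact mul_ne_zero hz.2 (hG z) hroot

end HasseDerivative

section Stepanov

variable {K : Type*} [Field K]

theorem exists_sum_smul_eq_zero_of_mem_degreeLT {κ : Type*} [Fintype κ] {M W : ℕ}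
    (hMW : M * W < Fintype.card κ) {V : κ → ℕ → K[X]} (hV : ∀ z, ∀ l < M, V z l ∈ degreeLT K W) :
    ∃ c : κ → K, c ≠ 0 ∧ ∀ l < M, ∑ z, c z • V z l = 0 := by
  let v (z : κ) (l : Fin M) : degreeLT K W := ⟨V z l, hV z l l.2⟩
  have hv : ¬ LinearIndependent K v := fun hli ↦ by
    have hcard := hli.fintype_card_le_finrank
    rw [Module.finrank_pi_fintype, Finset.sum_const, Finset.card_univ, Fintype.card_fin,
      (degreeLTEquiv K W).finrank_eq, Module.finrank_fin_fun] at hcard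
    exact hcard.not_gt hMW
  obtain ⟨c, hc, z, hz⟩ := Fintype.not_linearIndependent_iff.1 hv
  refine ⟨c, fun h ↦ hz (congrFun h z), fun l hl ↦ ?_⟩
  simpa [v] using congrArg Subtype.val (congrFun hc ⟨l, hl⟩)

/- The points of `A` carry a polynomial identity that replaces the Hasse derivatives of the `P z`
by polynomials `V z l` of small degree, so a nonzero combination of the `P z` with `M` vanishing
Hasse derivatives on `A` costs only `M * W` linear conditions. -/
theorem card_mul_le_of_linearIndependent {κ : Type*} [Fintype κ] {P : κ → K[X]}
    (hP : LinearIndependent K P) {D M W : ℕ} (hdeg : ∀ z, (P z).natDegree ≤ D)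
    (hMW : M * W < Fintype.card κ) {V : κ → ℕ → K[X]} (hV : ∀ z, ∀ l < M, V z l ∈ degreeLT K W)
    {h : K[X]} {A : Finset K} (hA : ∀ x ∈ A, h.eval x ≠ 0)
    (hPV : ∀ x ∈ A, ∀ l < M, ∀ z, (h ^ l * hasseDeriv l (P z)).eval x = (V z l).eval x) :
    A.card * M ≤ D := by
  obtain ⟨c, hc, hcV⟩ := exists_sum_smul_eq_zero_of_mem_degreeLT hMW hV
  have hf : ∑ z, c z • P z ≠ 0 := fun h0 ↦
    hc (funext (Fintype.linearIndependent_iff.1 hP c h0))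
  have hvanish : ∀ x ∈ A, ∀ l < M, (hasseDeriv l (∑ z, c z • P z)).eval x = 0 := by
    intro x hx l hl
    refine (mul_eq_zero.1 ?_).resolve_left (pow_ne_zero l (hA x hx))
    calc h.eval x ^ l * (hasseDeriv l (∑ z, c z • P z)).eval x
        = ∑ z, c z * (h ^ l * hasseDeriv l (P z)).eval x := by
          simp only [map_sum, map_smul, eval_finsetSum, eval_smul, smul_eq_mul, Finset.mul_sum,
            eval_mul, eval_pow, mul_left_comm]
      _ = (∑ z, c z • V z l).eval x := by
          simp only [hPV x hx l hl, eval_finsetSum, eval_smul, smul_eq_mul]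
      _ = 0 := by rw [hcV l hl, eval_zero]
  exact (card_mul_le_natDegree_of_hasseDeriv_eval_eq_zero hf hvanish).trans <|
    natDegree_sum_le_of_forall_le _ _ fun z _ ↦ (natDegree_smul_le _ _).trans (hdeg z)

theorem add_mul_inj_of_lt {b x y x' y' : ℕ} (hx : x < b) (hx' : x' < b)
    (h : x + b * y = x' + b * y') : x = x' ∧ y = y' := by
  have hb : 0 < b := hx.pos
  obtain ⟨hy, hx⟩ := (Nat.div_mod_unique hb).2 ⟨h, hx⟩
  obtain ⟨hy', hx'⟩ := (Nat.div_mod_unique hb).2 ⟨rfl, hx'⟩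
  exact ⟨hx.symm.trans hx', hy.symm.trans hy'⟩

/-- The polynomials `(X - t) ^ (k + Q * j) * f ^ (i * B)` whose combinations are the auxiliary
polynomials of Stepanov's method over the field with `Q` elements. At a point `x` with
`f(x) ^ B = a` they reduce to `(x - t) ^ (k + j) * a ^ i`. -/
noncomputable def stepanovPoly (f : K[X]) (t : K) (Q : ℕ) {m J B : ℕ}
    (z : Fin m × Fin J × Fin B) : K[X] :=
  (X - C t) ^ (z.2.2 + Q * z.2.1 : ℕ) * f ^ (z.1 * B : ℕ)

theorem linearIndependent_stepanovPoly {t : K} {g : K[X]} (hg : g.eval t ≠ 0) {Q m J B : ℕ}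
    (hQ : m * B ≤ Q) :
    LinearIndependent K
      (stepanovPoly ((X - C t) * g) t Q : Fin m × Fin J × Fin B → K[X]) := by
  let N (z : Fin m × Fin J × Fin B) : ℕ := z.2.2 + B * z.1 + Q * z.2.1
  have hN : Function.Injective N := by
    rintro ⟨i, j, k⟩ ⟨i', j', k'⟩ h
    have hlt (i : Fin m) (k : Fin B) : k + B * i < Q := by
      have := Nat.mul_le_mul_left B i.isLt
      grind
    obtain ⟨hik, hj⟩ := add_mul_inj_of_lt (hlt i k) (hlt i' k') h
    obtain ⟨hk, hi⟩ := add_mul_inj_of_lt k.isLt k'.isLt hik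
    ext <;> assumption
  convert linearIndependent_X_sub_C_pow_mul t hN (G := fun z ↦ g ^ (z.1 * B : ℕ))
    (fun z ↦ by rw [eval_pow]; exact pow_ne_zero _ hg) using 2 with z
  simp only [stepanovPoly, N, mul_pow]
  ring

theorem natDegree_stepanovPoly_le (f : K[X]) (t : K) {Q m J B : ℕ} (hQ : m * B ≤ Q)
    (z : Fin m × Fin J × Fin B) :
    (stepanovPoly f t Q z).natDegree ≤ Q * (J + f.natDegree) := by
  obtain ⟨i, j, k⟩ := z
  have hk : (k : ℕ) ≤ Q := by
    have := Nat.mul_le_mul_right B i.pos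
    omega
  have hi : i * B ≤ Q := (Nat.mul_le_mul_right B i.isLt.le).trans hQ
  calc (stepanovPoly f t Q (i, j, k)).natDegree ≤ (k + Q * j) * 1 + i * B * f.natDegree :=
        natDegree_mul_le_of_le (natDegree_pow_le_of_le _ (natDegree_X_sub_C_le t))
          natDegree_pow_le
    _ ≤ (Q + Q * j) + Q * f.natDegree := by rw [mul_one]; gcongr
    _ = Q * (j + 1 + f.natDegree) := by ring
    _ ≤ Q * (J + f.natDegree) := by gcongr; exact j.isLt

theorem isHasseLogarithmic_stepanovPoly {f : K[X]} (hf : f ≠ 0) {t : K} (ht : X - C t ∣ f)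
    (Q : ℕ) {m J B : ℕ} (z : Fin m × Fin J × Fin B) :
    IsHasseLogarithmic f (stepanovPoly f t Q z) :=
  ((IsHasseLogarithmic.of_dvd hf ht).pow _).mul ((IsHasseLogarithmic.of_dvd hf dvd_rfl).pow _)

theorem eval_stepanovPoly [Fintype K] {f : K[X]} (t : K) {m J B : ℕ} {a x : K}
    (hx : f.eval x ^ B = a) (z : Fin m × Fin J × Fin B) :
    (stepanovPoly f t (Fintype.card K) z).eval x =
      (C (a ^ (z.1 : ℕ)) * (X - C t) ^ (z.2.2 + z.2.1 : ℕ)).eval x := by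
  simp only [stepanovPoly, eval_mul, eval_pow, eval_sub, eval_X, eval_C, pow_add, ← hx]
  rw [pow_mul (x - t), FiniteField.pow_card, mul_comm (z.1 : ℕ), pow_mul]
  ring

theorem card_fiber_mul_le [Fintype K] {t : K} {g : K[X]} (hg : g.eval t ≠ 0) {f : K[X]}
    (hf : f = (X - C t) * g) {m J B M : ℕ} (hQ : m * B ≤ Fintype.card K)
    (hM : M * (B + J + M * f.natDegree) < m * (J * B)) (a : K) {A : Finset K}
    (hA : ∀ x ∈ A, f.eval x ≠ 0 ∧ f.eval x ^ B = a) :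
    A.card * M ≤ Fintype.card K * (J + f.natDegree) := by
  have hg0 : g ≠ 0 := by rintro rfl; exact hg eval_zero
  have hf0 : f ≠ 0 := hf ▸ mul_ne_zero (X_sub_C_ne_zero t) hg0
  choose p hp_deg hp using fun z : Fin m × Fin J × Fin B ↦
    isHasseLogarithmic_stepanovPoly hf0 (hf ▸ dvd_mul_right _ _) (Fintype.card K) (t := t) z
  let V (z : Fin m × Fin J × Fin B) (l : ℕ) : K[X] :=
    C (a ^ (z.1 : ℕ)) * (X - C t) ^ (z.2.2 + z.2.1 : ℕ) * p z l
  have hV : ∀ z, ∀ l < M, V z l ∈ degreeLT K (B + J + M * f.natDegree) := by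
    intro z l hl
    have hdeg : (V z l).natDegree ≤ 0 + (z.2.2 + z.2.1) * 1 + l * f.natDegree :=
      natDegree_mul_le_of_le (natDegree_mul_le_of_le (natDegree_C _).le
        (natDegree_pow_le_of_le _ (natDegree_X_sub_C_le t))) (hp_deg z l)
    have hl' := Nat.mul_le_mul_right f.natDegree hl.le
    exact mem_degreeLT.2 (degree_le_natDegree.trans_lt (Nat.cast_lt.2 (by omega)))
  refine card_mul_le_of_linearIndependent (hf ▸ linearIndependent_stepanovPoly hg hQ)
    (natDegree_stepanovPoly_le f t hQ) (by simpa using hM) hV (fun x hx ↦ (hA x hx).1)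
    fun x hx l _ z ↦ ?_
  rw [hp, eval_mul, eval_stepanovPoly t (hA x hx).2, ← eval_mul]

/- The multiplicity `u - 1` and the bound `L + deg f + 1` on the exponent of `(X - t) ^ u ^ 2`
balance the number of linear conditions against the degree of the auxiliary polynomial. -/
theorem card_fiber_le [Fintype K] {u m : ℕ} (hK : Fintype.card K = u ^ 2) (hm : m ∣ u - 1)
    {t : K} {g : K[X]} (hg : g.eval t ≠ 0) {f : K[X]} (hf : f = (X - C t) * g) (a : K)
    {A : Finset K} (hA : ∀ x ∈ A, f.eval x ≠ 0 ∧ f.eval x ^ ((u ^ 2 - 1) / m) = a) :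
    m * A.card ≤ u ^ 2 + 2 * m * (2 * f.natDegree + 1) * u := by
  have hu : 1 < u := (one_lt_sq_iff₀ u.zero_le).1 (hK ▸ Fintype.one_lt_card)
  obtain ⟨v, rfl⟩ : ∃ v, u = v + 2 := ⟨u - 2, by omega⟩
  obtain ⟨L, hL⟩ := hm
  replace hL : v + 1 = m * L := hL
  have hm0 : 0 < m := Nat.pos_of_ne_zero fun h ↦ by simp [h] at hL
  have hB : (v + 2) ^ 2 - 1 = m * (L * (v + 3)) := by
    rw [← mul_assoc, ← hL, Nat.sub_eq_iff_eq_add (by nlinarith)]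
    ring
  rw [hB, Nat.mul_div_cancel_left _ hm0] at hA
  have hLv : L ≤ v + 1 := hL ▸ Nat.le_mul_of_pos_left L hm0
  have hfib := card_fiber_mul_le (J := L + f.natDegree + 1) (M := v + 1) hg hf
    (by rw [hK, ← hB]; exact Nat.sub_le _ _) ?_ a hA
  · rw [hK] at hfib
    refine Nat.le_of_mul_le_mul_right (c := v + 1) ?_ v.succ_pos
    calc m * A.card * (v + 1) = m * (A.card * (v + 1)) := mul_assoc ..
      _ ≤ m * ((v + 2) ^ 2 * (L + f.natDegree + 1 + f.natDegree)) := by gcongr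
      _ = (v + 2) ^ 2 * (m * L) + (v + 2) * (m * (2 * f.natDegree + 1) * (v + 2)) := by ring
      _ ≤ (v + 2) ^ 2 * (v + 1) + 2 * (v + 1) * (m * (2 * f.natDegree + 1) * (v + 2)) := by
        rw [← hL]
        gcongr
        omega
      _ = _ := by ring
  · calc (v + 1) * (L * (v + 3) + (L + f.natDegree + 1) + (v + 1) * f.natDegree)
        < (v + 1) * ((L + f.natDegree + 1) * (v + 3)) := by
          gcongr
          nlinarith
      _ = m * ((L + f.natDegree + 1) * (L * (v + 3))) := by rw [hL]; ring

end Stepanov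

section CharacterSum

theorem sum_nthRootsFinset_one_eq_zero {R : Type*} [CommRing R] [IsDomain R] {ζ : R} {m : ℕ}
    (hζ : IsPrimitiveRoot ζ m) (hm : 1 < m) : ∑ v ∈ nthRootsFinset m (1 : R), v = 0 := by
  have hm0 : 0 < m := by omega
  obtain ⟨z, rfl⟩ := hζ.isUnit hm0.ne'
  have hshift : ∑ v ∈ nthRootsFinset m (1 : R), v = ∑ v ∈ nthRootsFinset m (1 : R), z * v := by
    refine (Finset.sum_equiv z.mulLeft (fun v ↦ ?_) fun v _ ↦ rfl).symm
    simp only [mem_nthRootsFinset hm0, Units.mulLeft_apply, mul_pow, hζ.pow_eq_one, one_mul]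
  rw [← Finset.mul_sum] at hshift
  exact (mul_left_eq_self₀.1 hshift.symm).resolve_left (hζ.ne_one hm)

theorem norm_sum_le_of_card_fiber_le {Y : Type*} (s : Finset Y) (φ : Y → ℂ) {m D : ℕ} (hm : 1 < m)
    (hφ : ∀ y ∈ s, φ y ^ m = 1)
    (hD : ∀ v : ℂ, v ^ m = 1 → m * (s.filter fun y ↦ φ y = v).card ≤ D) :
    ‖∑ y ∈ s, φ y‖ ≤ (D : ℝ) - s.card := by
  have hm0 : 0 < m := by omega
  have hζ := Complex.isPrimitiveRoot_exp m hm0.ne'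
  set V := nthRootsFinset m (1 : ℂ)
  have hV (v : ℂ) : v ∈ V ↔ v ^ m = 1 := mem_nthRootsFinset hm0 1
  have hmaps : ∀ y ∈ s, φ y ∈ V := fun y hy ↦ (hV _).2 (hφ y hy)
  let N (v : ℂ) : ℕ := (s.filter fun y ↦ φ y = v).card
  have hsum : ∑ y ∈ s, φ y = -∑ v ∈ V, ((D / m - N v : ℝ) : ℂ) * v := by
    have hfiber : ∑ y ∈ s, φ y = ∑ v ∈ V, (N v : ℂ) * v := by
      rw [← Finset.sum_fiberwise_of_maps_to hmaps]
      refine Finset.sum_congr rfl fun v _ ↦ ?_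
      rw [Finset.sum_congr rfl fun y hy ↦ (Finset.mem_filter.1 hy).2, Finset.sum_const,
        nsmul_eq_mul]
    push_cast
    simp only [sub_mul, Finset.sum_sub_distrib, ← Finset.mul_sum (a := (D / m : ℂ)), V,
      sum_nthRootsFinset_one_eq_zero hζ hm, mul_zero, zero_sub, neg_neg]
    exact hfiber
  calc ‖∑ y ∈ s, φ y‖ ≤ ∑ v ∈ V, ((D : ℝ) / m - N v) := by
        rw [hsum, norm_neg]
        refine norm_sum_le_of_le _ fun v hv ↦ ?_
        have hN : (N v : ℝ) ≤ D / m := by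
          rw [le_div_iff₀' (by positivity)]
          exact_mod_cast hD v ((hV v).1 hv)
        rw [norm_mul, Complex.norm_eq_one_of_pow_eq_one ((hV v).1 hv) hm0.ne', mul_one,
          Complex.norm_real, Real.norm_of_nonneg (sub_nonneg.2 hN)]
    _ = D - s.card := by
        rw [Finset.sum_sub_distrib, Finset.sum_const, hζ.card_nthRootsFinset, nsmul_eq_mul,
          mul_div_cancel₀ _ (by positivity), Finset.card_eq_sum_card_fiberwise hmaps]
        push_cast
        rfl

variable {F : Type*} [Field F]

theorem mulChar_apply_pow_orderOf_eq_one [Finite F] {R : Type*} [CommMonoidWithZero R]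
    (χ : MulChar F R) {a : F} (ha : a ≠ 0) : χ a ^ orderOf χ = 1 := by
  rw [← χ.pow_apply' χ.orderOf_pos.ne', pow_orderOf_eq_one, MulChar.one_apply ha.isUnit]

theorem norm_mulChar_apply_le_one [Finite F] (χ : MulChar F ℂ) (a : F) : ‖χ a‖ ≤ 1 := by
  rcases eq_or_ne a 0 with rfl | ha
  · simp [MulChar.map_zero]
  · exact (Complex.norm_eq_one_of_pow_eq_one (mulChar_apply_pow_orderOf_eq_one χ ha)
      χ.orderOf_pos.ne').le

variable [Fintype F]

theorem pow_eq_one_of_mulChar_apply_eq_one {R : Type*} [CommRing R] [IsDomain R]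
    (χ : MulChar F R) {b : F} (hb : χ b = 1) : b ^ ((Fintype.card F - 1) / orderOf χ) = 1 := by
  classical
  have hb0 : b ≠ 0 := by
    rintro rfl
    simp [MulChar.map_zero] at hb
  obtain ⟨g, hg⟩ := IsCyclic.exists_generator (α := Fˣ)
  obtain ⟨k, hk⟩ := mem_powers_iff_mem_zpowers.2 (hg (Units.mk0 b hb0))
  obtain rfl : (g : F) ^ k = b := congrArg Units.val hk
  have hχk : χ ^ k = 1 := by
    rw [MulChar.eq_iff hg, MulChar.pow_apply_coe, MulChar.one_apply_coe, ← map_pow, hb]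
  obtain ⟨j, rfl⟩ := orderOf_dvd_of_pow_eq_one hχk
  rw [← pow_mul, mul_right_comm, Nat.mul_div_cancel' χ.orderOf_dvd_card_sub_one, pow_mul,
    FiniteField.pow_card_sub_one_eq_one _ g.ne_zero, one_pow]

theorem pow_eq_pow_of_mulChar_apply_eq {R : Type*} [CommRing R] [IsDomain R]
    (χ : MulChar F R) {a b : F} (hb : b ≠ 0) (hab : χ a = χ b) :
    a ^ ((Fintype.card F - 1) / orderOf χ) = b ^ ((Fintype.card F - 1) / orderOf χ) := by
  have hquot : χ (a / b) = 1 := by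
    refine mul_right_cancel₀ (b := χ b) (MulChar.apply_ne_zero_iff.2 hb.isUnit) ?_
    rw [← map_mul, div_mul_cancel₀ _ hb, hab, one_mul]
  rwa [← div_eq_one_iff_eq (pow_ne_zero _ hb), ← div_pow,
    pow_eq_one_of_mulChar_apply_eq_one]

theorem norm_sum_mulChar_eval_le {χ : MulChar F ℂ} (hχ : χ ≠ 1) {u : ℕ}
    (hF : Fintype.card F = u ^ 2) (hu : orderOf χ ∣ u - 1) {t : F} {g : F[X]}
    (hg : g.eval t ≠ 0) {f : F[X]} (hf : f = (X - C t) * g) :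
    ‖∑ x, χ (f.eval x)‖ ≤ 2 * orderOf χ * (2 * f.natDegree + 1) * u + f.natDegree := by
  classical
  have hm : 1 < orderOf χ :=
    lt_of_le_of_ne χ.orderOf_pos fun h ↦ hχ (orderOf_eq_one_iff.1 h.symm)
  let s : Finset F := Finset.univ.filter fun x ↦ f.eval x ≠ 0
  have hs {x : F} : x ∈ s ↔ f.eval x ≠ 0 := by simp [s]
  have hrestrict : ∑ x, χ (f.eval x) = ∑ x ∈ s, χ (f.eval x) := by
    refine (Finset.sum_subset s.subset_univ fun x _ hx ↦ ?_).symm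
    rw [not_not.1 (mt hs.2 hx), MulChar.map_zero]
  have hf0 : f ≠ 0 := by
    rw [hf]
    exact mul_ne_zero (X_sub_C_ne_zero t) (by rintro rfl; exact hg eval_zero)
  have hs_card : (u ^ 2 : ℝ) ≤ s.card + f.natDegree := by
    have hroots : sᶜ ⊆ f.roots.toFinset := fun x hx ↦ by
      simpa [s, hf0] using hx
    have := (Finset.card_le_card hroots).trans
      ((Multiset.toFinset_card_le _).trans (card_roots' f))
    rw [Finset.card_compl, hF] at this
    exact_mod_cast Nat.sub_le_iff_le_add'.1 this
  have hfiber : ∀ v : ℂ, v ^ orderOf χ = 1 →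
      orderOf χ * (s.filter fun x ↦ χ (f.eval x) = v).card ≤
        u ^ 2 + 2 * orderOf χ * (2 * f.natDegree + 1) * u := by
    intro v _
    rcases (s.filter fun x ↦ χ (f.eval x) = v).eq_empty_or_nonempty with h | ⟨y, hy⟩
    · simp [h]
    · refine card_fiber_le hF hu hg hf (f.eval y ^ ((u ^ 2 - 1) / orderOf χ)) fun x hx ↦ ?_
      rw [Finset.mem_filter, hs] at hx hy
      exact ⟨hx.1, hF ▸ pow_eq_pow_of_mulChar_apply_eq χ hy.1 (hx.2.trans hy.2.symm)⟩
  have hbound := norm_sum_le_of_card_fiber_le s (fun x ↦ χ (f.eval x)) hm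
    (fun x hx ↦ mulChar_apply_pow_orderOf_eq_one χ (hs.1 hx)) hfiber
  push_cast at hbound
  rw [hrestrict]
  linarith

end CharacterSum

section NormLift

variable {F : Type*} [Field F] {R : Type*} [CommRing R]

/-- The character `χ ∘ Norm` of an extension `K` of `F`, as a homomorphism in `χ` so that orders of
characters can be compared. -/
noncomputable def mulCharNorm (K : Type*) [Field K] [Algebra F K] :
    MulChar F R →* MulChar K R where
  toFun χ := MulChar.ofUnitHom (χ.toUnitHom.comp (Units.map (Algebra.norm F)))
  map_one' := by
    ext a
    simp [MulChar.one_apply (a.isUnit.map _)]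
  map_mul' χ ψ := by
    ext a
    simp

variable {K : Type*} [Field K] [Algebra F K]

theorem mulCharNorm_apply [Nontrivial R] [FiniteDimensional F K] (χ : MulChar F R) (x : K) :
    mulCharNorm K χ x = χ (Algebra.norm F x) := by
  rcases eq_or_ne x 0 with rfl | hx
  · rw [Algebra.norm_zero, MulChar.map_zero, MulChar.map_zero]
  · lift x to Kˣ using hx.isUnit
    simp [mulCharNorm]

theorem mulCharNorm_injective [Nontrivial R] [Finite K] :
    Function.Injective (mulCharNorm (F := F) (R := R) K) := by
  intro χ ψ h
  have : Finite F := Finite.of_injective _ (algebraMap F K).injective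
  ext a
  obtain ⟨b, hb⟩ := FiniteField.norm_surjective F K a
  rw [← hb, ← mulCharNorm_apply, h, mulCharNorm_apply]

end NormLift

section MonicPolynomials

open UniqueFactorizationMonoid

variable (F : Type*) [Field F] [Finite F]

theorem finite_setOf_monic_natDegree_eq (d : ℕ) :
    {g : F[X] | g.Monic ∧ g.natDegree = d}.Finite :=
  Finite.of_equiv (Fin d → F) ((monicEquivDegreeLT d).trans (degreeLTEquiv F d).toEquiv).symm

/-- The monic polynomials of degree `d` over a finite field. -/
noncomputable def monicPolys (d : ℕ) : Finset F[X] :=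
  (finite_setOf_monic_natDegree_eq F d).toFinset

/-- The monic irreducible polynomials of degree dividing `r` over a finite field, that is the
minimal polynomials of the elements of its extension of degree `r` (there are none for `r = 0`). -/
noncomputable def monicIrreducibles (r : ℕ) : Finset F[X] :=
  open Classical in {P ∈ r.divisors.biUnion (monicPolys F) | Irreducible P}

variable {F}

theorem mem_monicPolys {d : ℕ} {g : F[X]} : g ∈ monicPolys F d ↔ g.Monic ∧ g.natDegree = d := by
  simp [monicPolys]

theorem mem_monicIrreducibles {r : ℕ} {P : F[X]} :
    P ∈ monicIrreducibles F r ↔ (P.Monic ∧ Irreducible P) ∧ P.natDegree ∣ r ∧ r ≠ 0 := by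
  simp only [monicIrreducibles, Finset.mem_filter, Finset.mem_biUnion, mem_monicPolys,
    Nat.mem_divisors]
  grind

variable (F) in
theorem monicPolys_zero : monicPolys F 0 = {1} := by
  ext g
  rw [mem_monicPolys, Finset.mem_singleton]
  exact ⟨fun h ↦ h.1.natDegree_eq_zero.1 h.2, by rintro rfl; simp⟩

theorem add_mem_monicPolys {d : ℕ} {g f : F[X]} (hg : g ∈ monicPolys F d) (hf : f.degree < d) :
    g + f ∈ monicPolys F d := by
  rw [mem_monicPolys] at hg ⊢
  have hlt : f.degree < g.degree := by rwa [degree_eq_natDegree hg.1.ne_zero, hg.2]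
  exact ⟨hg.1.add_of_left hlt, by rw [natDegree_add_eq_left_of_degree_lt hlt, hg.2]⟩

theorem pow_dvd_iff_le_count_normalizedFactors {K : Type*} [Field K] [DecidableEq K]
    {P g : K[X]} (hP : P.Monic) (hP' : Irreducible P) (hg : g ≠ 0) (k : ℕ) :
    P ^ k ∣ g ↔ k ≤ (normalizedFactors g).count P := by
  rw [pow_dvd_iff_le_emultiplicity, emultiplicity_eq_count_normalizedFactors hP' hg,
    hP.normalize_eq_self, Nat.cast_le]

theorem sum_count_mul_natDegree_normalizedFactors {K : Type*} [Field K] [DecidableEq K]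
    {g : K[X]} (hg : g.Monic) :
    ∑ P ∈ (normalizedFactors g).toFinset, (normalizedFactors g).count P * P.natDegree =
      g.natDegree := by
  have hmonic : ∀ P ∈ normalizedFactors g, P.Monic := fun P hP ↦
    ((Polynomial.mem_normalizedFactors_iff hg.ne_zero).1 hP).2.1
  have hprod : (normalizedFactors g).prod = g := by
    rw [prod_normalizedFactors_eq hg.ne_zero, hg.normalize_eq_self]
  calc _ = ((normalizedFactors g).map natDegree).sum := by
        simp only [Finset.sum_multiset_map_count, smul_eq_mul]
    _ = g.natDegree := by rw [← natDegree_multiset_prod_of_monic _ hmonic, hprod]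

open Classical in
/- The analogue for polynomials of `∑_{d ∣ n} Λ(d) = log n`: the prime powers are grouped by
their degree. -/
theorem sum_natDegree_of_pow_dvd {g : F[X]} (hg : g.Monic) :
    ∑ r ∈ Finset.Icc 1 g.natDegree,
      ∑ P ∈ monicIrreducibles F r with P ^ (r / P.natDegree) ∣ g, P.natDegree = g.natDegree := by
  have hmem {P : F[X]} : P ∈ normalizedFactors g ↔ Irreducible P ∧ P.Monic ∧ P ∣ g :=
    Polynomial.mem_normalizedFactors_iff hg.ne_zero
  have hpow {P : F[X]} (hP : P.Monic ∧ Irreducible P) :=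
    pow_dvd_iff_le_count_normalizedFactors hP.1 hP.2 hg.ne_zero
  refine Eq.trans ?_ (sum_count_mul_natDegree_normalizedFactors hg)
  rw [Finset.sum_sigma', Finset.sum_congr rfl fun P _ ↦ show (normalizedFactors g).count P *
    P.natDegree = ∑ _k ∈ Finset.Icc 1 ((normalizedFactors g).count P), P.natDegree by simp,
    Finset.sum_sigma']
  refine Finset.sum_bij' (fun rP _ ↦ ⟨rP.2, rP.1 / rP.2.natDegree⟩)
    (fun Pk _ ↦ ⟨Pk.2 * Pk.1.natDegree, Pk.1⟩) ?_ ?_ ?_ ?_ fun _ _ ↦ rfl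
  · rintro ⟨r, P⟩ h
    simp only [Finset.mem_sigma, Finset.mem_Icc, Finset.mem_filter, mem_monicIrreducibles,
      Multiset.mem_toFinset, hmem] at h ⊢
    obtain ⟨⟨hr, -⟩, ⟨hP, hPr, -⟩, hdvd⟩ := h
    have hk : 0 < r / P.natDegree := Nat.div_pos (Nat.le_of_dvd hr hPr) hP.2.natDegree_pos
    exact ⟨⟨hP.2, hP.1, (dvd_pow_self P hk.ne').trans hdvd⟩, hk, (hpow hP _).1 hdvd⟩
  · rintro ⟨P, k⟩ h
    simp only [Finset.mem_sigma, Finset.mem_Icc, Finset.mem_filter, mem_monicIrreducibles,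
      Multiset.mem_toFinset, hmem] at h ⊢
    obtain ⟨⟨hP', hP, -⟩, hk, hkc⟩ := h
    have hr : 0 < k * P.natDegree := Nat.mul_pos hk hP'.natDegree_pos
    have hdvd := (hpow ⟨hP, hP'⟩ k).2 hkc
    have hle := natDegree_le_of_dvd hdvd hg.ne_zero
    rw [natDegree_pow] at hle
    rw [Nat.mul_div_cancel _ hP'.natDegree_pos]
    exact ⟨⟨hr, hle⟩, ⟨⟨hP, hP'⟩, dvd_mul_left _ _, hr.ne'⟩, hdvd⟩
  · rintro ⟨r, P⟩ h
    simp only [Finset.mem_sigma, Finset.mem_filter, mem_monicIrreducibles] at h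
    simp [Nat.div_mul_cancel h.2.1.2.1]
  · rintro ⟨P, k⟩ h
    simp only [Finset.mem_sigma, Multiset.mem_toFinset, hmem] at h
    simp [Nat.mul_div_cancel k h.1.1.natDegree_pos]

variable {R : Type*} [CommRing R] (L : F[X] →* R)

open Classical in
theorem sum_monicPolys_filter_dvd {Q : F[X]} (hQ : Q.Monic) {d : ℕ} (hd : Q.natDegree ≤ d) :
    ∑ g ∈ monicPolys F d with Q ∣ g, L g = L Q * ∑ h ∈ monicPolys F (d - Q.natDegree), L h := by
  rw [Finset.mul_sum]
  symm
  refine Finset.sum_bij (fun h _ ↦ Q * h) (fun h hh ↦ ?_)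
    (fun _ _ _ _ ↦ mul_left_cancel₀ hQ.ne_zero) (fun g hg ↦ ?_) fun h _ ↦ (map_mul L Q h).symm
  · rw [mem_monicPolys] at hh
    rw [Finset.mem_filter, mem_monicPolys, hQ.natDegree_mul hh.1, hh.2]
    exact ⟨⟨hQ.mul hh.1, Nat.add_sub_cancel' hd⟩, dvd_mul_right _ _⟩
  · rw [Finset.mem_filter, mem_monicPolys] at hg
    obtain ⟨⟨hmonic, hdeg⟩, h, rfl⟩ := hg
    have hh : h.Monic := hQ.of_mul_monic_left hmonic
    rw [hQ.natDegree_mul hh] at hdeg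
    exact ⟨h, mem_monicPolys.2 ⟨hh, by omega⟩, rfl⟩

/-- The sums `∑ deg P * L(P) ^ (r / deg P)` over the irreducible `P` with `deg P ∣ r`. They are the
coefficients of `u * Z'(u) / Z(u)` for the generating series `Z(u) = ∑ L(g) * u ^ deg g` over monic
`g`. -/
noncomputable def primePowerSum (r : ℕ) : R :=
  ∑ P ∈ monicIrreducibles F r, P.natDegree * L P ^ (r / P.natDegree)

/- Newton's identity `u Z' = (u Z' / Z) Z`. -/
theorem natCast_mul_sum_monicPolys (d : ℕ) :
    (d : R) * ∑ g ∈ monicPolys F d, L g =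
      ∑ r ∈ Finset.Icc 1 d, primePowerSum L r * ∑ h ∈ monicPolys F (d - r), L h := by
  classical
  calc (d : R) * ∑ g ∈ monicPolys F d, L g
      = ∑ g ∈ monicPolys F d, ∑ r ∈ Finset.Icc 1 d, ∑ P ∈ monicIrreducibles F r,
          if P ^ (r / P.natDegree) ∣ g then P.natDegree * L g else 0 := by
        rw [Finset.mul_sum]
        refine Finset.sum_congr rfl fun g hg ↦ ?_
        obtain ⟨hmonic, rfl⟩ := mem_monicPolys.1 hg
        conv_lhs => rw [← sum_natDegree_of_pow_dvd hmonic]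
        simp only [Finset.sum_filter, Nat.cast_sum, Nat.cast_ite, Nat.cast_zero, Finset.sum_mul,
          ite_mul, zero_mul]
    _ = ∑ r ∈ Finset.Icc 1 d, ∑ P ∈ monicIrreducibles F r,
          P.natDegree * ∑ g ∈ monicPolys F d with P ^ (r / P.natDegree) ∣ g, L g := by
        simp only [Finset.mul_sum, Finset.sum_filter, mul_ite, mul_zero]
        rw [Finset.sum_comm]
        exact Finset.sum_congr rfl fun r _ ↦ Finset.sum_comm
    _ = ∑ r ∈ Finset.Icc 1 d, primePowerSum L r * ∑ h ∈ monicPolys F (d - r), L h := by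
        refine Finset.sum_congr rfl fun r hr ↦ ?_
        rw [primePowerSum, Finset.sum_mul]
        refine Finset.sum_congr rfl fun P hP ↦ ?_
        obtain ⟨hP, hPr, -⟩ := mem_monicIrreducibles.1 hP
        have hdeg : (P ^ (r / P.natDegree)).natDegree = r := by
          rw [natDegree_pow, Nat.div_mul_cancel hPr]
        rw [sum_monicPolys_filter_dvd L (hP.1.pow _) (hdeg.trans_le (Finset.mem_Icc.1 hr).2), hdeg,
          map_pow, mul_assoc]

end MonicPolynomials

section Extensions

variable {F : Type*} [Field F] [Finite F]

theorem card_filter_minpoly_eq {K : Type*} [Field K] [Fintype K] [Algebra F K] {P : F[X]}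
    (hP : P.Monic) (hP' : Irreducible P) (hdvd : P.natDegree ∣ Module.finrank F K) :
    open Classical in (Finset.univ.filter fun x : K ↦ minpoly F x = P).card = P.natDegree := by
  classical
  have : Fact (Irreducible P) := ⟨hP'⟩
  have : Module.Finite F (AdjoinRoot P) := (AdjoinRoot.powerBasis hP'.ne_zero).finite
  have : Finite (AdjoinRoot P) := Module.finite_of_finite F
  have hfinrank : Module.finrank F (AdjoinRoot P) = P.natDegree := by
    rw [(AdjoinRoot.powerBasis hP'.ne_zero).finrank, AdjoinRoot.powerBasis_dim]
  obtain ⟨φ⟩ := FiniteField.nonempty_algHom_of_finrank_dvd (F := F) (K := AdjoinRoot P) (L := K)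
    (by rwa [hfinrank])
  have hroot : aeval (φ (AdjoinRoot.root P)) P = 0 := by
    rw [aeval_algHom_apply, AdjoinRoot.aeval_eq, AdjoinRoot.mk_self, map_zero]
  have hsplit : (P.map (algebraMap F K)).Splits := by
    rw [minpoly.eq_of_irreducible_of_monic hP' hroot hP]
    exact Normal.splits inferInstance _
  rw [← card_rootSet_eq_natDegree (PerfectField.separable_of_irreducible hP') hsplit,
    ← Set.toFinset_card]
  congr 1
  ext x
  rw [Finset.mem_filter, Set.mem_toFinset, mem_rootSet]
  constructor
  · rintro ⟨-, rfl⟩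
    exact ⟨hP'.ne_zero, minpoly.aeval F x⟩
  · rintro ⟨-, hx⟩
    exact ⟨Finset.mem_univ _, (minpoly.eq_of_irreducible_of_monic hP' hx hP).symm⟩

variable {R : Type*} [CommRing R]

theorem sum_minpoly_pow_eq_primePowerSum (K : Type*) [Field K] [Fintype K] [Algebra F K]
    (L : F[X] →* R) :
    ∑ x : K, L (minpoly F x) ^ (Module.finrank F K / (minpoly F x).natDegree) =
      primePowerSum L (Module.finrank F K) := by
  classical
  have hmaps : ∀ x ∈ (Finset.univ : Finset K),
      minpoly F x ∈ monicIrreducibles F (Module.finrank F K) := by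
    intro x _
    have hx : IsIntegral F x := .of_finite F x
    exact mem_monicIrreducibles.2 ⟨⟨minpoly.monic hx, minpoly.irreducible hx⟩,
      minpoly.degree_dvd hx, Module.finrank_pos.ne'⟩
  rw [← Finset.sum_fiberwise_of_maps_to hmaps, primePowerSum]
  refine Finset.sum_congr rfl fun P hP ↦ ?_
  obtain ⟨⟨hP, hP'⟩, hdvd, -⟩ := mem_monicIrreducibles.1 hP
  rw [Finset.sum_congr rfl fun x hx ↦ by rw [(Finset.mem_filter.1 hx).2], Finset.sum_const,
    nsmul_eq_mul, ← card_filter_minpoly_eq (K := K) hP hP' hdvd]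

theorem norm_algebraMap_sub_powerBasis_gen {A B : Type*} [CommRing A] [CommRing B]
    [IsDomain A] [IsDomain B] [Algebra A B] (pb : PowerBasis A B) (s : A) :
    Algebra.norm A (algebraMap A B s - pb.gen) = (minpoly A pb.gen).eval s := by
  classical
  rw [Algebra.norm_eq_matrix_det pb.basis, ← charpoly_leftMulMatrix pb, Matrix.eval_charpoly,
    map_sub, AlgHom.commutes]
  rfl

theorem norm_algebraMap_sub {k K : Type*} [Field k] [Field K] [Algebra k K]
    [FiniteDimensional k K] (s : k) (x : K) :
    Algebra.norm k (algebraMap k K s - x) =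
      (minpoly k x).eval s ^ (Module.finrank k K / (minpoly k x).natDegree) := by
  have hx : IsIntegral k x := .of_finite k x
  have hlift : algebraMap k K s - x = algebraMap (IntermediateField.adjoin k {x}) K
      (algebraMap k _ s - (IntermediateField.adjoin.powerBasis hx).gen) := by
    simp
  rw [hlift, ← Algebra.norm_norm (S := IntermediateField.adjoin k {x}), Algebra.norm_algebraMap,
    map_pow, norm_algebraMap_sub_powerBasis_gen, ← IntermediateField.adjoin.finrank hx,
    ← Module.finrank_mul_finrank k (IntermediateField.adjoin k {x}) K,
    Nat.mul_div_cancel_left _ Module.finrank_pos, IntermediateField.adjoin.powerBasis_gen,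
    IntermediateField.minpoly_gen]

/-- The completely multiplicative function `g ↦ ∏ s ∈ T, χ (g s)` on polynomials, whose
generating series over monic `g` is the L-polynomial of the sum `∑ x, ∏ s ∈ T, χ (s - x)`. -/
noncomputable def evalProd {F : Type*} [Field F] (χ : MulChar F R) (T : Finset F) : F[X] →* R where
  toFun g := ∏ s ∈ T, χ (g.eval s)
  map_one' := by simp
  map_mul' g h := by simp [Finset.prod_mul_distrib]

theorem sum_prod_mulChar_norm_eq_primePowerSum (K : Type*) [Field K] [Fintype K] [Algebra F K]
    (χ : MulChar F R) (T : Finset F) :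
    ∑ x : K, ∏ s ∈ T, χ (Algebra.norm F (algebraMap F K s - x)) =
      primePowerSum (evalProd χ T) (Module.finrank F K) := by
  rw [← sum_minpoly_pow_eq_primePowerSum]
  simp only [norm_algebraMap_sub, evalProd, MonoidHom.coe_mk, OneHom.coe_mk, map_pow,
    Finset.prod_pow]

theorem sum_monicPolys_evalProd_eq_zero [IsDomain R] {χ : MulChar F R} (hχ : χ ≠ 1)
    {T : Finset F} (hT : T.Nonempty) {d : ℕ} (hd : T.card ≤ d) :
    ∑ g ∈ monicPolys F d, evalProd χ T g = 0 := by
  classical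
  obtain ⟨c, hc⟩ := MulChar.ne_one_iff.1 hχ
  obtain ⟨s₀, hs₀⟩ := hT
  set b := Lagrange.basis T id s₀
  have hb : b.eval s₀ = 1 := Lagrange.eval_basis_self Function.injective_id.injOn hs₀
  have hb' {s : F} (hs : s ∈ T.erase s₀) : b.eval s = 0 :=
    Lagrange.eval_basis_of_ne (v := id) (Finset.ne_of_mem_erase hs).symm
      (Finset.mem_of_mem_erase hs)
  have hdeg : b.degree < d := by
    rw [Lagrange.degree_basis Function.injective_id.injOn hs₀, Nat.cast_lt]
    exact (Nat.sub_lt (Finset.card_pos.2 ⟨s₀, hs₀⟩) one_pos).trans_le hd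
  /- `scale c` multiplies the value at `s₀` by `c` and fixes the values on the rest of `T`. -/
  let scale (c : F) (g : F[X]) : F[X] := g + C ((c - 1) * g.eval s₀) * b
  have hscale {c c' : F} (h : c * c' = 1) (g : F[X]) : scale c (scale c' g) = g := by
    have : C c * C c' = 1 := by rw [← C_mul, h, C_1]
    simp only [scale, eval_add, eval_mul, eval_C, hb]
    simp only [C_mul, C_sub, C_add, C_1]
    linear_combination C (g.eval s₀) * b * this
  have hmem (c : F) {g : F[X]} (hg : g ∈ monicPolys F d) : scale c g ∈ monicPolys F d :=
    add_mem_monicPolys hg ((smul_eq_C_mul (_ : F) ▸ degree_smul_le _ b).trans_lt hdeg)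
  have heval (g : F[X]) : evalProd χ T (scale c g) = χ c * evalProd χ T g := by
    simp only [evalProd, MonoidHom.coe_mk, OneHom.coe_mk]
    rw [← Finset.mul_prod_erase _ _ hs₀, ← Finset.mul_prod_erase _ _ hs₀, ← mul_assoc, ← map_mul]
    congr 1
    · simp [scale, hb, sub_mul]
    · exact Finset.prod_congr rfl fun s hs ↦ by simp [scale, hb' hs]
  refine (mul_eq_zero.1 (?_ : (χ c - 1) * _ = 0)).resolve_left (sub_ne_zero.2 hc)
  rw [sub_one_mul, Finset.mul_sum, sub_eq_zero]
  simp only [← heval]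
  exact Finset.sum_bij' (fun g _ ↦ scale c g) (fun g _ ↦ scale (c⁻¹ : Fˣ) g) (fun _ ↦ hmem _)
    (fun _ ↦ hmem _) (fun g _ ↦ hscale c.inv_mul g) (fun g _ ↦ hscale c.mul_inv g) fun _ _ ↦ rfl

end Extensions

section PowerSums

theorem natCast_mul_aeval_esymm {σ R : Type*} [Fintype σ] [CommRing R] (ω : σ → R) (k : ℕ) :
    k * ((-1) ^ k * MvPolynomial.aeval ω (MvPolynomial.esymm σ R k)) =
      ∑ r ∈ Finset.Icc 1 k, -(∑ i, ω i ^ r) *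
        ((-1) ^ (k - r) * MvPolynomial.aeval ω (MvPolynomial.esymm σ R (k - r))) := by
  classical
  have h := congrArg (MvPolynomial.aeval ω) (MvPolynomial.mul_esymm_eq_sum σ R k)
  simp only [map_mul, map_natCast, map_pow, map_neg, map_one, map_sum] at h
  rw [mul_left_comm, h, ← mul_assoc, ← pow_add, show k + (k + 1) = 2 * k + 1 by ring, pow_succ,
    pow_mul, neg_one_sq, one_pow, one_mul, neg_one_mul, ← Finset.sum_neg_distrib]
  refine Finset.sum_bij' (fun a _ ↦ a.2) (fun r _ ↦ (k - r, r)) ?_ ?_ ?_ ?_ ?_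
  · simp only [Finset.mem_filter, Finset.HasAntidiagonal.mem_antidiagonal, Finset.mem_Icc]
    omega
  · simp only [Finset.mem_filter, Finset.HasAntidiagonal.mem_antidiagonal, Finset.mem_Icc]
    omega
  · simp only [Finset.mem_filter, Finset.HasAntidiagonal.mem_antidiagonal, Prod.forall,
      Prod.mk.injEq, and_true]
    omega
  · simp
  · intro a ha
    simp only [Finset.mem_filter, Finset.HasAntidiagonal.mem_antidiagonal] at ha
    rw [← ha.1, Nat.add_sub_cancel, MvPolynomial.psum]
    simp only [map_sum, map_pow, MvPolynomial.aeval_X]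
    ring

theorem exists_forall_eq_aeval_esymm {k : Type*} [Field k] [IsAlgClosed k] {N : ℕ} {c : ℕ → k}
    (hc₀ : c 0 = 1) (hc : ∀ d, N < d → c d = 0) :
    ∃ ω : Fin N → k, ∀ d,
      c d = (-1) ^ d * MvPolynomial.aeval ω (MvPolynomial.esymm (Fin N) k d) := by
  set f : k[X] := ∑ i ∈ Finset.range (N + 1), C (c (N - i)) * X ^ i with hf
  have hcoeff {i : ℕ} (hi : i ≤ N) : f.coeff i = c (N - i) := by
    simp [hf, coeff_C_mul, coeff_X_pow, Nat.lt_succ_of_le hi]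
  have hdeg : f.natDegree = N := by
    refine natDegree_eq_of_le_of_coeff_ne_zero ?_ (by simp [hcoeff, hc₀])
    refine natDegree_sum_le_of_forall_le _ _ fun i hi ↦ ?_
    exact (natDegree_C_mul_X_pow_le _ _).trans (Nat.lt_succ_iff.1 (Finset.mem_range.1 hi))
  have hlead : f.leadingCoeff = 1 := by
    rw [leadingCoeff, hdeg, hcoeff le_rfl, Nat.sub_self, hc₀]
  have hcard : f.roots.card = f.natDegree := IsAlgClosed.card_roots_eq_natDegree
  obtain ⟨ω, hω⟩ : ∃ ω : Fin N → k, Finset.univ.val.map ω = f.roots := by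
    have hlen : N = f.roots.toList.length := by rw [Multiset.length_toList, hcard, hdeg]
    refine ⟨fun i ↦ f.roots.toList.get (i.cast hlen), ?_⟩
    rw [Fin.univ_val_map, ← List.ofFn_congr hlen.symm, List.ofFn_get, Multiset.coe_toList]
  refine ⟨ω, fun d ↦ ?_⟩
  rw [MvPolynomial.aeval_esymm_eq_multiset_esymm, hω]
  rcases le_or_gt d N with hd | hd
  · have h := coeff_eq_esymm_roots_of_card hcard (k := N - d) (by omega)
    rwa [hcoeff (Nat.sub_le N d), hlead, hdeg, Nat.sub_sub_self hd, one_mul] at h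
  · rw [hc d hd, Multiset.esymm, Multiset.powersetCard_eq_empty _ (by rwa [hcard, hdeg])]
    simp

theorem eq_of_newton_identities {R : Type*} [CommRing R] {c S S' : ℕ → R} (hc₀ : c 0 = 1)
    (hS : ∀ d : ℕ, d * c d = ∑ r ∈ Finset.Icc 1 d, S r * c (d - r))
    (hS' : ∀ d : ℕ, d * c d = ∑ r ∈ Finset.Icc 1 d, S' r * c (d - r)) {r : ℕ} (hr : r ≠ 0) :
    S r = S' r := by
  induction r using Nat.strong_induction_on with
  | _ r ih =>
    have hmem : r ∈ Finset.Icc 1 r := Finset.mem_Icc.2 ⟨Nat.one_le_iff_ne_zero.2 hr, le_rfl⟩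
    have h := (hS r).symm.trans (hS' r)
    rw [← Finset.sum_erase_add _ _ hmem, ← Finset.sum_erase_add _ _ hmem,
      Finset.sum_congr rfl fun t ht ↦ ?_, add_right_inj, Nat.sub_self, hc₀, mul_one, mul_one] at h
    · exact h
    · rw [Finset.mem_erase, Finset.mem_Icc] at ht
      rw [ih t (by omega) (by omega)]

theorem exists_eq_neg_sum_pow_of_newton_identities {k : Type*} [Field k] [IsAlgClosed k] {N : ℕ}
    {c S : ℕ → k} (hc₀ : c 0 = 1) (hc : ∀ d, N < d → c d = 0)
    (hS : ∀ d : ℕ, d * c d = ∑ r ∈ Finset.Icc 1 d, S r * c (d - r)) :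
    ∃ ω : Fin N → k, ∀ r ≠ 0, S r = -∑ i, ω i ^ r := by
  obtain ⟨ω, hω⟩ := exists_forall_eq_aeval_esymm hc₀ hc
  refine ⟨ω, fun r hr ↦ eq_of_newton_identities (S' := fun r ↦ -∑ i, ω i ^ r) hc₀ hS ?_ hr⟩
  simpa only [hω] using natCast_mul_aeval_esymm ω

theorem norm_le_one_of_norm_sum_pow_le {ι : Type*} [Fintype ι] {z : ι → ℂ} {B : ℝ}
    (h : ∀ r : ℕ, r ≠ 0 → ‖∑ i, z i ^ r‖ ≤ B) (j : ι) : ‖z j‖ ≤ 1 := by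
  by_contra! hj
  choose u hu using fun i ↦ (⟨Circle.exp (z i).arg, by
    rw [Circle.coe_exp, Complex.norm_mul_exp_arg_mul_I]⟩ : ∃ u : Circle, ‖z i‖ * (u : ℂ) = z i)
  have hnhds : {v : ι → Circle | ∀ i, 1 / 2 < (v i : ℂ).re} ∈ nhds (1 : ι → Circle) := by
    refine IsOpen.mem_nhds ?_ fun _ ↦ by norm_num
    rw [Set.ofPred_forall]
    exact isOpen_iInter_of_finite fun i ↦ isOpen_lt continuous_const (by fun_prop)
  /- Powers of a point of the torus `Circle ^ ι` return arbitrarily close to `1`. -/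
  have hfreq := (mapClusterPt_one_atTop_pow u).frequently hnhds
  have hlarge := (tendsto_pow_atTop_atTop_of_one_lt hj).eventually_gt_atTop (2 * B)
  obtain ⟨r, hr, hrB, hr0⟩ := (hfreq.and_eventually
    (hlarge.and (Filter.eventually_ne_atTop 0))).exists
  have hre (i : ι) : ‖z i‖ ^ r * (1 / 2) ≤ (z i ^ r).re := by
    have hpow : z i ^ r = ((‖z i‖ ^ r : ℝ) : ℂ) * ((u ^ r) i : Circle) := by
      conv_lhs => rw [← hu i]
      simp [mul_pow]
    rw [hpow, Complex.re_ofReal_mul]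
    exact mul_le_mul_of_nonneg_left (hr i).le (by positivity)
  have : ‖z j‖ ^ r * (1 / 2) ≤ B := calc
    _ ≤ ∑ i, ‖z i‖ ^ r * (1 / 2) := Finset.single_le_sum (f := fun i ↦ ‖z i‖ ^ r * (1 / 2))
        (fun i _ ↦ by positivity) (Finset.mem_univ j)
    _ ≤ ∑ i, (z i ^ r).re := Finset.sum_le_sum fun i _ ↦ hre i
    _ = (∑ i, z i ^ r).re := (Complex.re_sum _ _).symm
    _ ≤ ‖∑ i, z i ^ r‖ := Complex.re_le_norm _
    _ ≤ B := h r hr0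
  linarith

end PowerSums

section Weil

variable {F : Type*} [Field F] [Fintype F]

theorem norm_sum_prod_mulChar_norm_le {K : Type*} [Field K] [Fintype K] [Algebra F K] {r : ℕ}
    (hK : Module.finrank F K = 2 * r) {χ : MulChar F ℂ} (hχ : χ ≠ 1) {T : Finset F}
    (hT : T.Nonempty) :
    ‖∑ x : K, ∏ s ∈ T, χ (Algebra.norm F (algebraMap F K s - x))‖ ≤
      (2 * orderOf χ * (2 * T.card + 1) + T.card) * (Fintype.card F : ℝ) ^ r := by
  classical
  obtain ⟨s₀, hs₀⟩ := hT
  set q := Fintype.card F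
  have hcard : Fintype.card K = (q ^ r) ^ 2 := by
    rw [Module.card_eq_pow_finrank (K := F) (V := K), hK, ← pow_mul, mul_comm]
  have horder : orderOf (mulCharNorm K χ) = orderOf χ := orderOf_injective _ mulCharNorm_injective χ
  have hdvd : orderOf (mulCharNorm K χ) ∣ q ^ r - 1 := by
    rw [horder]
    exact χ.orderOf_dvd_card_sub_one.trans (by simpa using Nat.sub_dvd_pow_sub_pow q 1 r)
  let factor (s : F) : K[X] := C (algebraMap F K s) - X
  set f := ∏ s ∈ T, factor s
  set g := -∏ s ∈ T.erase s₀, factor s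
  have hf : f = (X - C (algebraMap F K s₀)) * g := by
    simp only [f, g, ← Finset.mul_prod_erase _ _ hs₀, factor]
    ring
  have hg : g.eval (algebraMap F K s₀) ≠ 0 := by
    simp only [g, factor, eval_neg, eval_prod, eval_sub, eval_C, eval_X, neg_ne_zero]
    exact Finset.prod_ne_zero_iff.2 fun s hs ↦
      sub_ne_zero.2 ((algebraMap F K).injective.ne (Finset.ne_of_mem_erase hs))
  have hdeg : f.natDegree ≤ T.card := by
    simpa [factor, natDegree_sub] using natDegree_prod_le T factor
  have hbound := norm_sum_mulChar_eval_le ((map_ne_one_iff _ mulCharNorm_injective).2 hχ)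
    hcard hdvd hg hf
  rw [horder] at hbound
  have hq : (1 : ℝ) ≤ (q : ℝ) ^ r := one_le_pow₀ (Nat.one_le_cast.2 Fintype.card_pos)
  calc _ = ‖∑ x, mulCharNorm K χ (f.eval x)‖ := by
        simp [mulCharNorm_apply, f, factor, eval_prod]
    _ ≤ 2 * orderOf χ * (2 * f.natDegree + 1) * (q ^ r : ℕ) + f.natDegree := hbound
    _ ≤ 2 * orderOf χ * (2 * T.card + 1) * (q ^ r : ℕ) + T.card := by gcongr
    _ ≤ _ := by
        rw [add_mul, Nat.cast_pow]
        gcongr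
        exact le_mul_of_one_le_right (by positivity) hq

theorem norm_primePowerSum_evalProd_le {χ : MulChar F ℂ} (hχ : χ ≠ 1) {T : Finset F}
    (hT : T.Nonempty) {r : ℕ} (hr : r ≠ 0) :
    ‖primePowerSum (evalProd χ T) (2 * r)‖ ≤
      (2 * orderOf χ * (2 * T.card + 1) + T.card) * (Fintype.card F : ℝ) ^ r := by
  obtain ⟨p, _⟩ := CharP.exists F
  have : Fact p.Prime := ⟨CharP.char_is_prime F p⟩
  have : NeZero (2 * r) := ⟨by positivity⟩
  let K := FiniteField.Extension F p (2 * r)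
  have : Fintype K := Fintype.ofFinite K
  have hK : Module.finrank F K = 2 * r := FiniteField.finrank_extension F p (2 * r)
  rw [← hK, ← sum_prod_mulChar_norm_eq_primePowerSum K]
  exact norm_sum_prod_mulChar_norm_le hK hχ hT

/-- Weil's bound for character sums of products of distinct linear factors. -/
theorem norm_sum_prod_mulChar_le {χ : MulChar F ℂ} (hχ : χ ≠ 1) {T : Finset F}
    (hT : T.Nonempty) :
    ‖∑ x, ∏ s ∈ T, χ (s - x)‖ ≤ (T.card - 1 : ℕ) * √(Fintype.card F) := by
  set q := Fintype.card F
  have hq : (0 : ℝ) < q := Nat.cast_pos.2 Fintype.card_pos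
  obtain ⟨ω, hω⟩ := exists_eq_neg_sum_pow_of_newton_identities (N := T.card - 1)
    (by rw [monicPolys_zero, Finset.sum_singleton, map_one])
    (fun d hd ↦ sum_monicPolys_evalProd_eq_zero hχ hT (by omega))
    (natCast_mul_sum_monicPolys (evalProd χ T))
  have hfirst : ∑ x, ∏ s ∈ T, χ (s - x) = -∑ j, ω j := by
    have := sum_prod_mulChar_norm_eq_primePowerSum F χ T
    rw [Module.finrank_self, hω 1 one_ne_zero] at this
    simpa using this
  have hωq (j) : ‖ω j‖ ≤ √q := by
    have : ‖ω j ^ 2 / q‖ ≤ 1 := norm_le_one_of_norm_sum_pow_le (z := fun j ↦ ω j ^ 2 / q)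
      (fun r hr ↦ by
        have := norm_primePowerSum_evalProd_le hχ hT hr
        rw [hω _ (by positivity), norm_neg] at this
        simp only [div_pow, ← pow_mul]
        rwa [← Finset.sum_div, norm_div, norm_pow, Complex.norm_natCast,
          div_le_iff₀ (by positivity)]) j
    rw [norm_div, Complex.norm_natCast, div_le_one hq, norm_pow] at this
    exact Real.le_sqrt_of_sq_le this
  rw [hfirst, norm_neg]
  exact (norm_sum_le_of_le _ fun j _ ↦ hωq j).trans_eq (by simp)

end Weil

section Covering

variable {F : Type*} [Field F]

theorem exists_mulChar_ne_one_of_ne_top [Finite F] {H : Subgroup Fˣ} (hH : H ≠ ⊤) :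
    ∃ χ : MulChar F ℂ, χ ≠ 1 ∧ ∀ u ∈ H, χ u = 1 := by
  obtain ⟨v, hv⟩ : ∃ v, v ∉ H := by simpa [Subgroup.eq_top_iff'] using hH
  have h := mt (CommGroup.forall_monoidHom_apply_eq_one_iff (M := ℂ) H v).1 hv
  push Not at h
  obtain ⟨φ, hφH, hφv⟩ := h
  refine ⟨MulChar.ofUnitHom φ, MulChar.ne_one_iff.2 ⟨v, ?_⟩, fun u hu ↦ ?_⟩
  · rwa [MulChar.ofUnitHom_coe, ne_eq, Units.val_eq_one]
  · rw [MulChar.ofUnitHom_coe, hφH u hu, Units.val_one]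

variable [Fintype F]

theorem norm_sum_prod_one_sub_mulChar_sub_card_le {χ : MulChar F ℂ} (hχ : χ ≠ 1) (T : Finset F) :
    ‖∑ x, ∏ s ∈ T, (1 - χ (s - x)) - Fintype.card F‖ ≤
      (2 ^ T.card - 1) * ((T.card - 1 : ℕ) * √(Fintype.card F)) := by
  classical
  have hexpand : ∑ x, ∏ s ∈ T, (1 - χ (s - x)) - Fintype.card F =
      ∑ U ∈ T.powerset.erase ∅, (-1) ^ U.card * ∑ x, ∏ s ∈ U, χ (s - x) := by
    rw [Finset.sum_erase_eq_sub (Finset.empty_mem_powerset T)]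
    simp only [sub_eq_add_neg (1 : ℂ), Finset.prod_one_add, Finset.prod_neg, Finset.mul_sum]
    rw [Finset.sum_comm]
    simp
  have hterm : ∀ U ∈ T.powerset.erase ∅, ‖(-1) ^ U.card * ∑ x, ∏ s ∈ U, χ (s - x)‖ ≤
      (T.card - 1 : ℕ) * √(Fintype.card F) := by
    intro U hU
    obtain ⟨hU₀, hUT⟩ := Finset.mem_erase.1 hU
    rw [norm_mul, norm_pow, norm_neg, norm_one, one_pow, one_mul]
    refine (norm_sum_prod_mulChar_le hχ (Finset.nonempty_iff_ne_empty.2 hU₀)).trans ?_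
    gcongr
    exact Finset.mem_powerset.1 hUT
  rw [hexpand]
  refine (norm_sum_le_of_le _ hterm).trans_eq ?_
  rw [Finset.sum_const, Finset.card_erase_of_mem (Finset.empty_mem_powerset T),
    Finset.card_powerset, nsmul_eq_mul, Nat.cast_sub Nat.one_le_two_pow]
  push_cast
  rfl

theorem exists_forall_ne_and_mulChar_sub_ne_one {χ : MulChar F ℂ} (hχ : χ ≠ 1) {T : Finset F}
    (hT : (T.card * 2 ^ T.card) ^ 2 ≤ Fintype.card F) :
    ∃ x, ∀ s ∈ T, x ≠ s ∧ χ (s - x) ≠ 1 := by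
  classical
  by_contra! hcover
  rcases T.eq_empty_or_nonempty with rfl | hT₀
  · simpa using hcover 0
  set Q := √(Fintype.card F)
  have hsupport : ∑ x, ∏ s ∈ T, (1 - χ (s - x)) = ∑ x ∈ T, ∏ s ∈ T, (1 - χ (s - x)) := by
    refine (Finset.sum_subset T.subset_univ fun x _ hx ↦ ?_).symm
    obtain ⟨s, hs, h⟩ := hcover x
    exact Finset.prod_eq_zero hs (sub_eq_zero.2 (h (ne_of_mem_of_not_mem hs hx).symm).symm)
  have hupper : ‖∑ x, ∏ s ∈ T, (1 - χ (s - x))‖ ≤ T.card * 2 ^ T.card := by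
    rw [hsupport, ← nsmul_eq_mul, ← Finset.sum_const]
    refine norm_sum_le_of_le T fun x _ ↦ ?_
    rw [norm_prod, ← Finset.prod_const]
    refine Finset.prod_le_prod (fun s _ ↦ norm_nonneg _) fun s _ ↦ (norm_sub_le _ _).trans ?_
    linarith [norm_one (α := ℂ), norm_mulChar_apply_le_one χ (s - x)]
  have hcard : (Fintype.card F : ℝ) ≤
      T.card * 2 ^ T.card + (2 ^ T.card - 1) * ((T.card - 1) * Q) := by
    have h := norm_sum_prod_one_sub_mulChar_sub_card_le hχ T
    rw [Nat.cast_pred hT₀.card_pos] at h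
    have := norm_le_norm_add_norm_sub' (Fintype.card F : ℂ) (∑ x, ∏ s ∈ T, (1 - χ (s - x)))
    rw [Complex.norm_natCast, norm_sub_rev] at this
    linarith
  have hQ : T.card * 2 ^ T.card ≤ Q := Real.le_sqrt_of_sq_le (by exact_mod_cast hT)
  have hQ_sq : Q ^ 2 = Fintype.card F := Real.sq_sqrt (Nat.cast_nonneg _)
  have hn : (1 : ℝ) ≤ T.card := Nat.one_le_cast.2 hT₀.card_pos
  have hn' : (2 : ℝ) ≤ 2 ^ T.card := le_self_pow₀ one_le_two hT₀.card_pos.ne'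
  have hQ_pos : 0 < Q := by nlinarith
  have hneg : (2 - 2 ^ T.card - T.card) * Q < 0 := mul_neg_of_neg_of_pos (by linarith) hQ_pos
  nlinarith [mul_le_mul_of_nonneg_right hQ hQ_pos.le]

theorem exists_forall_sub_eq_unit_notMem {H : Subgroup Fˣ} (hH : H ≠ ⊤) {T : Finset F}
    (hT : (T.card * 2 ^ T.card) ^ 2 ≤ Fintype.card F) :
    ∃ x, ∀ s ∈ T, ∃ u ∉ H, x - s = u := by
  classical
  obtain ⟨χ, hχ, hχH⟩ := exists_mulChar_ne_one_of_ne_top hH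
  obtain ⟨x, hx⟩ := exists_forall_ne_and_mulChar_sub_ne_one hχ
    (T := T.map (Equiv.neg F).toEmbedding) (by rwa [Finset.card_map])
  refine ⟨-x, fun s hs ↦ ?_⟩
  obtain ⟨hxs, hne⟩ := hx (-s) (Finset.mem_map_of_mem _ hs)
  rw [show -s - x = -x - s by ring] at hne
  have h0 : -x - s ≠ 0 := fun h ↦ hxs (by linear_combination -h)
  exact ⟨Units.mk0 _ h0, fun hu ↦ hne (hχH _ hu), rfl⟩

end Covering

section Potents

open scoped Pointwise

variable (F : Type*) [Field F] [Fintype F] [DecidableEq F]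

/-- The `n`-potents `C_n` of a finite field. -/
def potents (n : ℕ) : Finset F := {a | a ^ n = a}

variable {F}

theorem mem_potents {n : ℕ} {a : F} : a ∈ potents F n ↔ a ^ n = a := by
  simp [potents]

variable (F)

theorem card_potents_le {n : ℕ} (hn : 1 < n) : (potents F n).card ≤ n := by
  have hne : (X ^ n - X : F[X]) ≠ 0 := FiniteField.X_pow_card_sub_X_ne_zero F hn
  have hsub : potents F n ⊆ (X ^ n - X : F[X]).roots.toFinset := fun a ha ↦ by
    simpa [hne, sub_eq_zero] using mem_potents.1 ha
  calc (potents F n).card ≤ (X ^ n - X : F[X]).roots.toFinset.card := Finset.card_le_card hsub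
    _ ≤ (X ^ n - X : F[X]).natDegree := (Multiset.toFinset_card_le _).trans (card_roots' _)
    _ = n := FiniteField.X_pow_card_sub_X_natDegree_eq F hn

/- Of the twelve sums, `1 + 0 = 0 + 1` and `-1 + 1 = 0 + 0` coincide. -/
theorem card_potents_three_add_potents_four_le : (potents F 3 + potents F 4).card ≤ 10 := by
  set P := potents F 3 ×ˢ potents F 4 with hP
  have hmem (b c : F) : (b, c) ∈ P ↔ b ^ 3 = b ∧ c ^ 4 = c := by
    rw [hP, Finset.mem_product, mem_potents, mem_potents]
  have hcard : P.card ≤ 3 * 4 := by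
    rw [hP, Finset.card_product]
    exact Nat.mul_le_mul (card_potents_le F (by simp)) (card_potents_le F (by simp))
  have hpair : {(1, 0), (-1, 1)} ⊆ P := by
    rw [Finset.insert_subset_iff, Finset.singleton_subset_iff, hmem, hmem]
    exact ⟨by simp, by ring, by ring⟩
  have hsub : potents F 3 + potents F 4 ⊆ (P \ {(1, 0), (-1, 1)}).image fun p ↦ p.1 + p.2 := by
    intro γ hγ
    obtain ⟨b, hb, c, hc, rfl⟩ := Finset.mem_add.1 hγ
    rw [Finset.mem_image]
    by_cases h₁ : (b, c) = (1, 0)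
    · obtain ⟨rfl, rfl⟩ := Prod.mk.inj h₁
      exact ⟨(0, 1), by simp [hmem], by simp⟩
    by_cases h₂ : (b, c) = (-1, 1)
    · obtain ⟨rfl, rfl⟩ := Prod.mk.inj h₂
      exact ⟨(0, 0), by simp [hmem], by simp⟩
    exact ⟨(b, c), by simp [hP, hb, hc, h₁, h₂, -Prod.mk.injEq], rfl⟩
  calc (potents F 3 + potents F 4).card ≤ (P \ {(1, 0), (-1, 1)}).card :=
        (Finset.card_le_card hsub).trans Finset.card_image_le
    _ = P.card - 2 := by rw [Finset.card_sdiff_of_subset hpair, Finset.card_pair (by simp)]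
    _ ≤ 10 := by omega

variable {F}

theorem potents_ne_univ {n : ℕ} (hn : 1 < n) (hF : n < Fintype.card F) :
    potents F n ≠ Finset.univ := fun h ↦
  (card_potents_le F hn).not_gt (by rwa [h, Finset.card_univ])

theorem not_sum_potent_tripotent_fourpotent_of_large_general (hF : 104857600 < Fintype.card F)
    {k : ℕ} (hk : k ≠ 0) (hk' : potents F k ≠ Finset.univ) :
    potents F k + potents F 3 + potents F 4 ≠ Finset.univ := by
  let H := (powMonoidHom k).eqLocus (MonoidHom.id Fˣ)
  have hH : H ≠ ⊤ := by
    obtain ⟨a, ha⟩ : ∃ a, a ∉ potents F k := by simpa [Finset.eq_univ_iff_forall] using hk'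
    rw [mem_potents] at ha
    have ha₀ : a ≠ 0 := fun h ↦ ha (by rw [h, zero_pow hk])
    intro h
    have : Units.mk0 a ha₀ ^ k = Units.mk0 a ha₀ := h.ge (Subgroup.mem_top (Units.mk0 a ha₀))
    exact ha (congrArg Units.val this)
  set T := potents F 3 + potents F 4
  have hT_card : (T.card * 2 ^ T.card) ^ 2 ≤ Fintype.card F := by
    have hT_le : T.card ≤ 10 := card_potents_three_add_potents_four_le F
    calc (T.card * 2 ^ T.card) ^ 2 ≤ (10 * 2 ^ 10) ^ 2 := by gcongr; norm_num
      _ ≤ Fintype.card F := by omega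
  obtain ⟨x, hx⟩ := exists_forall_sub_eq_unit_notMem hH hT_card
  intro hcover
  rw [add_assoc] at hcover
  obtain ⟨a, ha, s, hs, rfl⟩ := Finset.mem_add.1 (hcover.ge (Finset.mem_univ x))
  obtain ⟨u, hu, h⟩ := hx s hs
  rw [add_sub_cancel_right] at h
  exact hu (Units.ext (by simpa [h] using mem_potents.1 ha))

end Potents

/-- If `q > 2²⁰ · 10² = 104857600` is a prime power, then for every `k` with `1 < k < q` and
`(k-1) ∣ (q-1)`, not every element of the finite field with `q` elements is the sum of a
`k`-potent, a `3`-potent and a `4`-potent. -/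
theorem not_sum_potent_tripotent_fourpotent_of_large
    (q : ℕ) (hq : IsPrimePow q) (hq' : 104857600 < q)
    (F : Type*) [Field F] [Fintype F] (hF : Fintype.card F = q) :
    ∀ k : ℕ, 1 < k → k < q → (k - 1) ∣ (q - 1) →
      ¬ (∀ γ : F, ∃ a b c : F, a ^ k = a ∧ b ^ 3 = b ∧ c ^ 4 = c ∧ a + b + c = γ) := by
  classical
  intro k hk hkq _ hall
  refine not_sum_potent_tripotent_fourpotent_of_large_general (hF ▸ hq') (by omega)
    (potents_ne_univ hk (hF ▸ hkq)) (Finset.eq_univ_iff_forall.2 fun γ ↦ ?_)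
  obtain ⟨a, b, c, ha, hb, hc, rfl⟩ := hall γ
  exact Finset.add_mem_add (Finset.add_mem_add (mem_potents.2 ha) (mem_potents.2 hb))
    (mem_potents.2 hc)
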